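/- arXiv:2304.03398 — 8 statements merged into one kernel-verified Lean document; each statement's English description precedes it below -/
import Mathlib

section
/- Let N ≥ 1 and let s_1, …, s_{N+1} be real numbers, and let k be an integer with 1 ≤ k ≤ N. Denote by q_N the k-th smallest value among s_1, …, s_N and by q_{N+1} the k-th smallest value among s_1, …, s_{N+1}. Then s_{N+1} > q_N if and only if s_{N+1} > q_{N+1}. -/
/-- The `k`-th smallest value (counting multiplicities) of a list of reals:
the `k`-th entry of the list sorted in nondecreasing order. -/
noncomputable def kthSmallest (l : List ℝ) (k : ℕ) : ℝ :=
  (l.mergeSort (fun a b => @decide (a ≤ b) (Classical.propDecidable _))).getD (k - 1) 0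

theorem getD_lt_iff_aux (x : ℝ) (l : List ℝ) (hl : l.Pairwise (· ≤ ·)) :
    ∀ j, j < l.length → (l.getD j 0 < x ↔ j < l.countP (fun a => decide (a < x))) := by
  induction l with
  | nil => intro j hj; simp at hj
  | cons a t ih =>
    intro j hj
    rw [List.pairwise_cons] at hl
    by_cases hax : a < x
    · rw [List.countP_cons_of_pos (by simpa using hax)]
      cases j with
      | zero => simpa using hax
      | succ j =>
        have hj' : j < t.length := by simpa using hj
        rw [List.getD_cons_succ, ih hl.2 j hj']
        omega
    · have hall : ∀ b ∈ a :: t, ¬ b < x := by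
        intro b hb
        rcases List.mem_cons.1 hb with rfl | hb
        · exact hax
        · exact fun h => hax (lt_of_le_of_lt (hl.1 b hb) h)
      have h0 : (a :: t).countP (fun a => decide (a < x)) = 0 := by
        rw [List.countP_eq_zero]
        intro b hb
        simpa using hall b hb
      rw [h0, List.getD_eq_getElem _ _ hj]
      have := hall _ (List.getElem_mem hj)
      simp only [this, Nat.not_lt_zero]

theorem kthSmallest_lt_iff_aux (x : ℝ) (l : List ℝ) (k : ℕ) (hk : k - 1 < l.length) :
    kthSmallest l k < x ↔ k - 1 < l.countP (fun a => decide (a < x)) := by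
  unfold kthSmallest
  rw [getD_lt_iff_aux x _ _ _ (by simpa using hk), (List.mergeSort_perm l _).countP_eq]
  have := List.pairwise_mergeSort
    (le := fun a b : ℝ => @decide (a ≤ b) (Classical.propDecidable _))
    (by intro a b c h1 h2
        simp only [decide_eq_true_eq] at *
        exact h1.trans h2)
    (by intro a b
        simp only [Bool.or_eq_true, decide_eq_true_eq]
        exact le_total a b) l
  exact this.imp (by intro a b h; simpa only [decide_eq_true_eq] using h)

/-- Quantile-equivalence identity: for reals `s 0, …, s N` and `1 ≤ k ≤ N`,
`s (N+1) > (k-th smallest of the first N)` iff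
`s (N+1) > (k-th smallest of all N+1)`. -/
theorem quantile_equivalence (N : ℕ) (hN : 1 ≤ N) (s : Fin (N + 1) → ℝ)
    (k : ℕ) (hk1 : 1 ≤ k) (hk2 : k ≤ N) :
    kthSmallest (List.ofFn fun i : Fin N => s i.castSucc) k < s (Fin.last N) ↔
      kthSmallest (List.ofFn s) k < s (Fin.last N) := by
  rw [kthSmallest_lt_iff_aux _ _ _ (by rw [List.length_ofFn]; omega),
    kthSmallest_lt_iff_aux _ _ _ (by rw [List.length_ofFn]; omega), List.ofFn_succ',
    List.concat_eq_append, List.countP_append]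
  simp
end

section
/- Let s_1, …, s_{N+1} be exchangeable real-valued random variables and let α ∈ (0,1) satisfy α ≥ 1/(N+1). Set k = ⌈(1−α)(N+1)⌉ and let Q*_{1−α} denote the k-th smallest value among all of s_1, …, s_{N+1}. Then Pr( s_{N+1} ≤ Q*_{1−α} ) ≥ 1 − α. -/
open MeasureTheory

/-- Real-valued random variables `s 0, …, s (n-1)` are exchangeable if the joint
distribution of any permutation of them equals the original joint distribution. -/
def Exchangeable {Ω : Type*} [MeasurableSpace Ω] (P : Measure Ω) {n : ℕ}
    (s : Fin n → Ω → ℝ) : Prop :=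
  ∀ π : Equiv.Perm (Fin n),
    Measure.map (fun ω i => s (π i) ω) P = Measure.map (fun ω i => s i ω) P

/-- The `i`-th entry has fewer than `k` entries strictly below it. -/
def LowRank {n : ℕ} (k : ℕ) (i : Fin n) (x : Fin n → ℝ) : Prop :=
  ∑ j : Fin n, (if x j < x i then 1 else 0) < k

lemma kthSmallest_ofFn {n : ℕ} (x : Fin n → ℝ) (k : ℕ) (hk : k - 1 < n) :
    kthSmallest (List.ofFn x) k = x (Tuple.sort x ⟨k - 1, hk⟩) := by
  have h : (List.ofFn x).mergeSort
      (fun a b => @decide (a ≤ b) (Classical.propDecidable _)) =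
      List.ofFn (x ∘ Tuple.sort x) := by
    apply List.Perm.eq_of_pairwise (le := fun a b : ℝ => a ≤ b)
    · intro a b _ _ h1 h2
      exact le_antisymm h1 h2
    · have := List.pairwise_mergeSort
        (le := fun a b : ℝ => @decide (a ≤ b) (Classical.propDecidable _))
        (by intro a b c h1 h2
            simp only [decide_eq_true_eq] at *
            exact h1.trans h2)
        (by intro a b
            simp only [Bool.or_eq_true, decide_eq_true_eq]
            exact le_total a b) (List.ofFn x)
      refine this.imp ?_
      intro a b h
      simpa using h
    · exact (Tuple.monotone_sort x).sortedLE_ofFn.pairwise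
    · exact (List.mergeSort_perm _ _).trans (Equiv.Perm.ofFn_comp_perm _ _).symm
  unfold kthSmallest
  rw [h, List.getD_eq_getElem _ _ (by simpa using hk)]
  simp

lemma LowRank.le_kth {n : ℕ} {x : Fin n → ℝ} {k : ℕ} {i : Fin n} (hk0 : 0 < k) (hk : k ≤ n)
    (h : LowRank k i x) : x i ≤ kthSmallest (List.ofFn x) k := by
  rw [kthSmallest_ofFn x k (by omega)]
  by_contra! hlt
  unfold LowRank at h
  rw [← Finset.card_filter] at h
  have hsub : (Finset.univ : Finset (Fin k)).image
      (fun m => Tuple.sort x (Fin.castLE hk m)) ⊆ Finset.univ.filter (fun j => x j < x i) := by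
    intro j hj
    simp only [Finset.mem_image, Finset.mem_univ, true_and] at hj
    obtain ⟨m, rfl⟩ := hj
    simp only [Finset.mem_filter, Finset.mem_univ, true_and]
    refine lt_of_le_of_lt ?_ hlt
    apply Tuple.monotone_sort x
    rw [Fin.le_def]
    simp only [Fin.val_castLE]
    omega
  have hc := Finset.card_le_card hsub
  rw [Finset.card_image_of_injective (f := fun m => Tuple.sort x (Fin.castLE hk m)) _
    ((Tuple.sort x).injective.comp (Fin.castLE_injective hk))] at hc
  simp at hc
  omega

open Classical in
lemma card_lowRank {n : ℕ} (x : Fin n → ℝ) {k : ℕ} (hk : k ≤ n) :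
    k ≤ (Finset.univ.filter (fun i => LowRank k i x)).card := by
  have hsub : (Finset.univ : Finset (Fin k)).image
      (fun m => Tuple.sort x (Fin.castLE hk m)) ⊆
      Finset.univ.filter (fun i => LowRank k i x) := by
    intro j hj
    simp only [Finset.mem_image, Finset.mem_univ, true_and] at hj
    obtain ⟨m, rfl⟩ := hj
    simp only [Finset.mem_filter, Finset.mem_univ, true_and]
    unfold LowRank
    rw [← Finset.card_filter]
    have hs : Finset.univ.filter (fun j => x j < x (Tuple.sort x (Fin.castLE hk m))) ⊆
        (Finset.Iio (Fin.castLE hk m)).image (Tuple.sort x) := by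
      intro j hj
      simp only [Finset.mem_filter, Finset.mem_univ, true_and] at hj
      rw [Finset.mem_image]
      refine ⟨(Tuple.sort x).symm j, ?_, by simp⟩
      rw [Finset.mem_Iio]
      by_contra! hle
      have := Tuple.monotone_sort x hle
      simp only [Function.comp_apply, Equiv.apply_symm_apply] at this
      linarith
    have := (Finset.card_le_card hs).trans Finset.card_image_le
    simp at this
    omega
  have hc := Finset.card_le_card hsub
  rw [Finset.card_image_of_injective (f := fun m => Tuple.sort x (Fin.castLE hk m)) _
    ((Tuple.sort x).injective.comp (Fin.castLE_injective hk))] at hc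
  simpa using hc

lemma measurableSet_lowRank {n : ℕ} (k : ℕ) (i : Fin n) :
    MeasurableSet {x : Fin n → ℝ | LowRank k i x} := by
  unfold LowRank
  refine measurableSet_lt ?_ measurable_const
  refine Finset.measurable_sum _ fun j _ => ?_
  exact Measurable.ite (measurableSet_lt (measurable_pi_apply j) (measurable_pi_apply i))
    measurable_const measurable_const

lemma lowRank_perm {n : ℕ} (k : ℕ) (i : Fin n) (x : Fin n → ℝ) (π : Equiv.Perm (Fin n)) :
    LowRank k i (fun j => x (π j)) ↔ LowRank k (π i) x := by
  unfold LowRank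
  rw [Equiv.sum_comp π (fun j => if x j < x (π i) then 1 else 0)]

/-- If `s 1, …, s (N+1)` are exchangeable and `α ∈ (0,1)` with `α ≥ 1/(N+1)`, then
with `k = ⌈(1-α)(N+1)⌉` and `Q*` the `k`-th smallest among all `N+1` variables,
`Pr(s (N+1) ≤ Q*) ≥ 1 - α`. -/
theorem coverage_with_augmented_quantile
    {Ω : Type*} [MeasurableSpace Ω] (P : Measure Ω) [IsProbabilityMeasure P]
    (N : ℕ) (s : Fin (N + 1) → Ω → ℝ) (hmeas : ∀ i, Measurable (s i))
    (hexch : Exchangeable P s)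
    (α : ℝ) (hα0 : 0 < α) (hα1 : α < 1) (hαN : 1 / ((N : ℝ) + 1) ≤ α) :
    ENNReal.ofReal (1 - α) ≤
      P {ω | s (Fin.last N) ω ≤
        kthSmallest (List.ofFn fun i => s i ω) ⌈(1 - α) * ((N : ℝ) + 1)⌉₊} := by
  classical
  set k := ⌈(1 - α) * ((N : ℝ) + 1)⌉₊ with hkdef
  have hN : (0 : ℝ) < (N : ℝ) + 1 := by positivity
  have hk0 : 0 < k := Nat.ceil_pos.2 (mul_pos (by linarith) hN)
  have hk : k ≤ N + 1 := by
    apply Nat.ceil_le.2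
    push_cast
    nlinarith
  have hX : Measurable (fun ω i => s i ω) := measurable_pi_lambda _ hmeas
  have hB : ∀ i, MeasurableSet {ω | LowRank k i (fun j => s j ω)} := fun i =>
    hX (measurableSet_lowRank k i)
  have heq : ∀ i, P {ω | LowRank k i (fun j => s j ω)} =
      P {ω | LowRank k (Fin.last N) (fun j => s j ω)} := by
    intro i
    have h := hexch (Equiv.swap (Fin.last N) i)
    have h2 := congrArg (fun μ => μ {x | LowRank k (Fin.last N) x}) h
    rw [Measure.map_apply (measurable_pi_lambda _ fun j => hmeas _) (measurableSet_lowRank _ _),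
      Measure.map_apply hX (measurableSet_lowRank _ _)] at h2
    rw [← show _ = P {ω | LowRank k (Fin.last N) (fun j => s j ω)} from h2]
    congr 1
    ext ω
    have := lowRank_perm k (Fin.last N) (fun j => s j ω) (Equiv.swap (Fin.last N) i)
    rw [Equiv.swap_apply_left] at this
    exact this.symm
  have hsum : (k : ENNReal) ≤ ∑ i : Fin (N + 1), P {ω | LowRank k i (fun j => s j ω)} := by
    calc (k : ENNReal) = ∫⁻ _, (k : ENNReal) ∂P := by simp
      _ ≤ ∫⁻ ω, ∑ i : Fin (N + 1),
          ({ω | LowRank k i (fun j => s j ω)} : Set Ω).indicator 1 ω ∂P := by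
        apply lintegral_mono
        intro ω
        have := card_lowRank (fun j => s j ω) hk
        simp only [Set.indicator_apply, Set.mem_ofPred_eq, Pi.one_apply]
        rw [Finset.sum_boole]
        exact_mod_cast this
      _ = _ := by
        rw [lintegral_finsetSum _ fun i _ => measurable_one.indicator (hB i)]
        exact Finset.sum_congr rfl fun i _ => lintegral_indicator_one (hB i)
  rw [Finset.sum_congr rfl fun i _ => heq i] at hsum
  simp only [Finset.sum_const, Finset.card_univ, Fintype.card_fin, nsmul_eq_mul] at hsum
  refine le_trans ?_ (measure_mono (μ := P)
    (fun ω (hω : LowRank k (Fin.last N) (fun j => s j ω)) => hω.le_kth hk0 hk))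
  change _ ≤ P {ω | LowRank k (Fin.last N) (fun j => s j ω)}
  set p := P {ω | LowRank k (Fin.last N) (fun j => s j ω)} with hp
  have hpt : p ≠ ⊤ := measure_ne_top _ _
  rw [ENNReal.ofReal_le_iff_le_toReal hpt]
  have h3 := ENNReal.toReal_mono (ENNReal.mul_ne_top (ENNReal.natCast_ne_top _) hpt) hsum
  rw [ENNReal.toReal_mul, ENNReal.toReal_natCast, ENNReal.toReal_natCast] at h3
  push_cast at h3
  have h4 : (1 - α) * ((N : ℝ) + 1) ≤ k := Nat.le_ceil _
  nlinarith
end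

section
/- (Quantile lemma) Let s_1, …, s_{N+1} be exchangeable real-valued random variables and let α ∈ (0,1) satisfy α ≥ 1/(N+1). Set k = ⌈(1−α)(N+1)⌉ and let Q_{1−α}({s_i}_{i=1}^N) denote the k-th smallest value among the first N variables s_1, …, s_N. Then Pr( s_{N+1} ≤ Q_{1−α}({s_i}_{i=1}^N) ) ≥ 1 − α. -/
open MeasureTheory

lemma ql_countP_ofFn (x : ℝ) : ∀ (n : ℕ) (f : Fin n → ℝ),
    (List.ofFn f).countP (fun a => @decide (a < x) (Classical.propDecidable _)) = ∑ i, (if f i < x then 1 else 0 : ℕ)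
  | 0, f => by simp
  | n+1, f => by
    rw [List.ofFn_succ, List.countP_cons, ql_countP_ofFn x n, Fin.sum_univ_succ, add_comm]
    simp

lemma ql_le_kth (l : List ℝ) (k : ℕ) (hk : 1 ≤ k) (hkl : k ≤ l.length) (x : ℝ)
    (h : l.countP (fun a => @decide (a < x) (Classical.propDecidable _)) < k) :
    x ≤ kthSmallest l k := by
  classical
  by_contra hc
  push Not at hc
  unfold kthSmallest at hc
  set L := l.mergeSort (fun a b => @decide (a ≤ b) (Classical.propDecidable _)) with hL
  have hperm : L.Perm l := List.mergeSort_perm _ _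
  have hs : L.Pairwise (fun a b => a ≤ b) := by
    have := List.pairwise_mergeSort (le := fun a b : ℝ => @decide (a ≤ b) (Classical.propDecidable _))
      (by intro a b c; simpa using le_trans) (by intro a b; simpa using le_total a b) l
    simpa using this
  have hlen : L.length = l.length := hperm.length_eq
  have hk1 : k - 1 < L.length := by omega
  rw [List.getD_eq_getElem _ _ hk1] at hc
  rw [← hperm.countP_eq] at h
  have h2 : (L.take k).countP (fun a => @decide (a < x) (Classical.propDecidable _)) = (L.take k).length := by
    rw [List.countP_eq_length]
    intro a ha
    obtain ⟨i, hi, rfl⟩ := List.mem_iff_getElem.1 ha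
    have hi' : i < k := by simp at hi; omega
    simp only [List.getElem_take, decide_eq_true_eq]
    refine lt_of_le_of_lt ?_ hc
    rcases (show i ≤ k - 1 by omega).lt_or_eq with h3 | h3
    · exact List.pairwise_iff_getElem.1 hs _ _ _ _ h3
    · subst h3; exact le_rfl
  have h3 := (List.take_sublist k L).countP_le (p := (fun a => @decide (a < x) (Classical.propDecidable _)))
  rw [h2, List.length_take] at h3
  omega

lemma ql_count {n : ℕ} (x : Fin n → ℝ) (k : ℕ) (hk : k ≤ n) :
    k ≤ (Finset.univ.filter fun j => (∑ i, (if x i < x j then 1 else 0 : ℕ)) < k).card := by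
  classical
  have hm := Tuple.monotone_sort x
  calc k = ((Finset.univ : Finset (Fin k)).map
        ((Fin.castLEEmb hk).trans (Tuple.sort x).toEmbedding)).card := by simp
    _ ≤ _ := by
      apply Finset.card_le_card
      intro j hj
      simp only [Finset.mem_map, Finset.mem_univ, true_and] at hj
      obtain ⟨m, rfl⟩ := hj
      simp only [Finset.mem_filter, Finset.mem_univ, true_and]
      set m' : Fin n := Fin.castLE hk m
      have : ∑ i, (if x i < x (Tuple.sort x m') then 1 else 0 : ℕ) ≤ (m' : ℕ) := by
        rw [← Equiv.sum_comp (Tuple.sort x), ← Finset.card_filter, ← Fin.card_Iio m']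
        apply Finset.card_le_card
        intro i hi
        simp only [Finset.mem_filter, Finset.mem_univ, true_and] at hi
        rw [Finset.mem_Iio]
        by_contra hc
        exact absurd (hm (not_lt.1 hc)) (not_le.2 hi)
      exact lt_of_le_of_lt this m.2

/-- Quantile lemma: if `s 1, …, s (N+1)` are exchangeable and `α ∈ (0,1)` with
`α ≥ 1/(N+1)`, then with `k = ⌈(1-α)(N+1)⌉` and `Q` the `k`-th smallest among the
first `N` variables, `Pr(s (N+1) ≤ Q) ≥ 1 - α`. -/
theorem quantile_lemma
    {Ω : Type*} [MeasurableSpace Ω] (P : Measure Ω) [IsProbabilityMeasure P]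
    (N : ℕ) (s : Fin (N + 1) → Ω → ℝ) (hmeas : ∀ i, Measurable (s i))
    (hexch : Exchangeable P s)
    (α : ℝ) (hα0 : 0 < α) (hα1 : α < 1) (hαN : 1 / ((N : ℝ) + 1) ≤ α) :
    ENNReal.ofReal (1 - α) ≤
      P {ω | s (Fin.last N) ω ≤
        kthSmallest (List.ofFn fun i : Fin N => s i.castSucc ω)
          ⌈(1 - α) * ((N : ℝ) + 1)⌉₊} := by
  classical
  set k := ⌈(1 - α) * ((N : ℝ) + 1)⌉₊ with hk
  have hN : (0:ℝ) < (N:ℝ) + 1 := by positivity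
  have hk1 : 1 ≤ k := Nat.ceil_pos.2 (mul_pos (by linarith) hN)
  have hkN : k ≤ N := by
    apply Nat.ceil_le.2
    rw [div_le_iff₀ hN] at hαN
    linarith
  have hkr : (1 - α) * ((N : ℝ) + 1) ≤ k := Nat.le_ceil _
  let B : Fin (N+1) → Set (Fin (N+1) → ℝ) :=
    fun j => {x | (∑ i, (if x i < x j then 1 else 0 : ℕ)) < k}
  have hB : ∀ j, MeasurableSet (B j) := by
    intro j
    have : Measurable (fun x : Fin (N+1) → ℝ => (∑ i, (if x i < x j then 1 else 0 : ℕ))) := by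
      refine Finset.measurable_sum _ fun i _ => ?_
      exact Measurable.ite (measurableSet_lt (measurable_pi_apply i) (measurable_pi_apply j))
        measurable_const measurable_const
    exact this (measurableSet_Iio (a := k))
  have hS : Measurable (fun ω i => s i ω) := measurable_pi_lambda _ hmeas
  set A : Fin (N+1) → Set Ω := fun j => (fun ω i => s i ω) ⁻¹' B j with hA
  have hAm : ∀ j, MeasurableSet (A j) := fun j => hS (hB j)
  have hPA : ∀ j, P (A j) = P (A (Fin.last N)) := by
    intro j
    let π := Equiv.swap j (Fin.last N)
    have h1 := congrArg (fun μ => μ (B (Fin.last N))) (hexch π)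
    rw [Measure.map_apply (measurable_pi_lambda _ fun i => hmeas _) (hB _),
      Measure.map_apply hS (hB _)] at h1
    rw [← h1]
    congr 1
    ext ω
    simp only [hA, B, Set.mem_preimage, Set.mem_ofPred_eq]
    rw [← Equiv.sum_comp π]
    simp [π]
  have hsum : (k : ENNReal) ≤ ∑ j, P (A j) := by
    calc (k : ENNReal) = ∫⁻ _, (k : ENNReal) ∂P := by simp
      _ ≤ ∫⁻ ω, ∑ j, (A j).indicator 1 ω ∂P := by
        apply lintegral_mono
        intro ω
        have := ql_count (fun i => s i ω) k (by omega)
        rw [Finset.card_filter] at this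
        have h2 : ∑ j, (A j).indicator (1 : Ω → ENNReal) ω = ((∑ j, if (∑ i, (if s i ω < s j ω then 1 else 0 : ℕ)) < k then 1 else 0 : ℕ) : ENNReal) := by
          push_cast
          refine Finset.sum_congr rfl fun j _ => ?_
          simp [Set.indicator_apply, hA, B]
        simp only [h2]
        exact_mod_cast this
      _ = ∑ j, P (A j) := by
        rw [lintegral_finsetSum _ fun j _ => measurable_one.indicator (hAm j)]
        simp [lintegral_indicator_one (hAm _)]
  simp only [hPA, Finset.sum_const, Finset.card_univ, Fintype.card_fin, nsmul_eq_mul] at hsum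
  have hfin : ENNReal.ofReal (1 - α) ≤ P (A (Fin.last N)) := by
    rw [ENNReal.ofReal_le_iff_le_toReal (measure_ne_top _ _)]
    have h1 := ENNReal.toReal_mono (by finiteness) hsum
    rw [ENNReal.toReal_mul, ENNReal.toReal_natCast, ENNReal.toReal_natCast] at h1
    push_cast at h1
    have h2 := hkr.trans h1
    rw [mul_comm] at h2
    exact le_of_mul_le_mul_left h2 hN
  refine hfin.trans (measure_mono ?_)
  intro ω hω
  simp only [hA, B, Set.mem_preimage, Set.mem_ofPred_eq] at hω ⊢
  rw [Fin.sum_univ_castSucc] at hω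
  apply ql_le_kth _ _ hk1 (by simpa using hkN)
  rw [ql_countP_ofFn]
  simpa using hω
end

section
/- Let s_1, …, s_{N+1} be exchangeable real-valued random variables such that, almost surely, all N+1 values are pairwise distinct. Let α ∈ (0,1) satisfy α ≥ 1/(N+1), set k = ⌈(1−α)(N+1)⌉, and let Q_{1−α}({s_i}_{i=1}^N) denote the k-th smallest value among s_1, …, s_N. Then Pr( s_{N+1} ≤ Q_{1−α}({s_i}_{i=1}^N) ) = k/(N+1) = ⌈(1−α)(N+1)⌉/(N+1). -/
open MeasureTheory
open scoped ENNReal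

theorem sorted_le_getD (t : ℝ) : ∀ (L : List ℝ) (m : ℕ), L.Pairwise (· ≤ ·) → m < L.length →
    (t ≤ L.getD m 0 ↔ L.countP (fun a => decide (a < t)) ≤ m)
  | [], m, _, h => by simp at h
  | a :: L, m, hs, h => by
    rw [List.pairwise_cons] at hs
    by_cases hat : a < t
    · cases m with
      | zero => simp [hat]
      | succ m =>
        have := sorted_le_getD t L m hs.2 (by simpa using h)
        rw [List.countP_cons_of_pos (by simpa using hat), List.getD_cons_succ, this]
        omega
    · have h0 : (a :: L).countP (fun a => decide (a < t)) = 0 := by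
        rw [List.countP_eq_zero]
        intro b hb
        rcases List.mem_cons.1 hb with rfl | hb
        · simpa using hat
        · have := hs.1 b hb
          simp only [decide_eq_true_eq, not_lt] at *
          linarith
      rw [h0]
      simp only [zero_le, iff_true]
      rw [List.getD_eq_getElem _ _ h]
      have hm : (a :: L)[m] ∈ a :: L := List.getElem_mem h
      rcases List.mem_cons.1 hm with e | hb
      · rw [e]; linarith
      · have := hs.1 _ hb
        linarith

/-- Rank of the `j`-th coordinate. -/
noncomputable def rk {n : ℕ} (x : Fin n → ℝ) (j : Fin n) : ℕ :=
  ∑ i, if x i < x j then 1 else 0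

theorem le_kth_iff {N : ℕ} (x : Fin (N + 1) → ℝ) (k : ℕ) (hk : 1 ≤ k) (hkN : k ≤ N) :
    x (Fin.last N) ≤ kthSmallest (List.ofFn fun i : Fin N => x i.castSucc) k ↔
      rk x (Fin.last N) < k := by
  unfold kthSmallest
  rw [sorted_le_getD]
  · rw [(List.mergeSort_perm _ _).countP_eq]
    have : (List.ofFn fun i : Fin N => x i.castSucc).countP
        (fun a => decide (a < x (Fin.last N))) = rk x (Fin.last N) := by
      unfold rk
      rw [Fin.sum_univ_castSucc, ← Multiset.coe_countP, ← Fin.univ_val_map, Multiset.countP_map]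
      simp [Finset.card, Finset.sum_boole]
    rw [this]; omega
  · have := List.pairwise_mergeSort
      (le := fun a b : ℝ => @decide (a ≤ b) (Classical.propDecidable _))
      (by intro a b c; simpa using le_trans) (by intro a b; simpa using le_total a b)
      (List.ofFn fun i : Fin N => x i.castSucc)
    simpa using this
  · simp; omega

theorem rk_card {n : ℕ} (x : Fin n → ℝ) (hx : Function.Injective x) (k : ℕ) (hk : k ≤ n) :
    (∑ j, if rk x j < k then 1 else 0) = k := by
  have hlt : ∀ a b, x a < x b → rk x a < rk x b := by
    intro a b hab
    unfold rk
    apply Finset.sum_lt_sum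
    · intro i _
      by_cases h : x i < x a
      · simp [h, h.trans hab]
      · simp [h]
    · exact ⟨a, Finset.mem_univ _, by simp [hab]⟩
  have hinj : Function.Injective (rk x) := by
    intro a b hab
    rcases lt_trichotomy (x a) (x b) with h | h | h
    · have := hlt _ _ h; omega
    · exact hx h
    · have := hlt _ _ h; omega
  have hn : ∀ j, rk x j < n := by
    intro j
    have : rk x j < ∑ i : Fin n, 1 := by
      unfold rk
      apply Finset.sum_lt_sum
      · intro i _; split_ifs <;> simp
      · exact ⟨j, Finset.mem_univ _, by simp⟩
    simpa using this
  have him : Finset.univ.image (rk x) = Finset.range n := by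
    apply Finset.eq_of_subset_of_card_le
    · intro m; simp only [Finset.mem_image, Finset.mem_range]; rintro ⟨j, _, rfl⟩; exact hn j
    · rw [Finset.card_image_of_injective _ hinj]; simp
  rw [← Finset.sum_image (f := fun m => if m < k then 1 else 0) (fun a _ b _ h => hinj h), him,
    ← Finset.card_filter]
  have : (Finset.range n).filter (· < k) = Finset.range k := by
    ext m; simp; omega
  rw [this]; simp

theorem rk_meas {n : ℕ} (j : Fin n) : Measurable (fun x : Fin n → ℝ => rk x j) := by
  unfold rk
  refine Finset.measurable_sum _ fun i _ => ?_
  exact Measurable.ite (measurableSet_lt (measurable_pi_apply i) (measurable_pi_apply j))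
    measurable_const measurable_const

theorem rk_perm {n : ℕ} (x : Fin n → ℝ) (π : Equiv.Perm (Fin n)) (j : Fin n) :
    rk (fun i => x (π i)) j = rk x (π j) := by
  unfold rk
  exact Equiv.sum_comp π (fun i => if x i < x (π j) then 1 else 0)

/-- Exact coverage: if `s 1, …, s (N+1)` are exchangeable and almost surely pairwise
distinct, and `α ∈ (0,1)` with `α ≥ 1/(N+1)`, then with `k = ⌈(1-α)(N+1)⌉` and `Q`
the `k`-th smallest among the first `N` variables,
`Pr(s (N+1) ≤ Q) = k/(N+1)`. -/
theorem exact_coverage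
    {Ω : Type*} [MeasurableSpace Ω] (P : Measure Ω) [IsProbabilityMeasure P]
    (N : ℕ) (s : Fin (N + 1) → Ω → ℝ) (hmeas : ∀ i, Measurable (s i))
    (hexch : Exchangeable P s)
    (hdistinct : ∀ᵐ ω ∂P, ∀ i j : Fin (N + 1), i ≠ j → s i ω ≠ s j ω)
    (α : ℝ) (hα0 : 0 < α) (hα1 : α < 1) (hαN : 1 / ((N : ℝ) + 1) ≤ α) :
    P {ω | s (Fin.last N) ω ≤
        kthSmallest (List.ofFn fun i : Fin N => s i.castSucc ω)
          ⌈(1 - α) * ((N : ℝ) + 1)⌉₊}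
      = (⌈(1 - α) * ((N : ℝ) + 1)⌉₊ : ℝ≥0∞) / ((N : ℝ≥0∞) + 1) := by
  have hN : (0:ℝ) < (N:ℝ) + 1 := by positivity
  have hk1 : 1 ≤ ⌈(1 - α) * ((N : ℝ) + 1)⌉₊ := by
    rw [Nat.one_le_ceil_iff]; exact mul_pos (by linarith) hN
  have hkN : ⌈(1 - α) * ((N : ℝ) + 1)⌉₊ ≤ N := by
    rw [Nat.ceil_le]
    rw [div_le_iff₀ hN] at hαN
    linarith
  generalize ⌈(1 - α) * ((N : ℝ) + 1)⌉₊ = k at hk1 hkN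
  have hX : Measurable (fun ω i => s i ω) := measurable_pi_lambda _ hmeas
  have hset : ∀ j : Fin (N+1), MeasurableSet {x : Fin (N+1) → ℝ | rk x j < k} := fun j =>
    measurableSet_lt (rk_meas j) measurable_const
  have hA : ∀ j, MeasurableSet {ω | rk (fun i => s i ω) j < k} := fun j => hX (hset j)
  have e1 : {ω | s (Fin.last N) ω ≤
        kthSmallest (List.ofFn fun i : Fin N => s i.castSucc ω) k}
      = {ω | rk (fun i => s i ω) (Fin.last N) < k} := by
    ext ω
    exact le_kth_iff (fun i => s i ω) k hk1 hkN
  rw [e1]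
  have e2 : ∀ j, P {ω | rk (fun i => s i ω) j < k}
      = P {ω | rk (fun i => s i ω) (Fin.last N) < k} := by
    intro j
    have h := congrArg (fun μ => μ {x : Fin (N+1) → ℝ | rk x (Fin.last N) < k})
      (hexch (Equiv.swap (Fin.last N) j))
    rw [Measure.map_apply (measurable_pi_lambda _ fun i => hmeas _) (hset _),
      Measure.map_apply hX (hset _)] at h
    rw [Set.preimage_setOf_eq, Set.preimage_setOf_eq] at h
    rw [← h]
    congr 1
    ext ω
    have := rk_perm (fun i => s i ω) (Equiv.swap (Fin.last N) j) (Fin.last N)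
    simp only [Equiv.swap_apply_left] at this
    simp only [Set.mem_setOf_eq, this]
  have e3 : ∑ j, P {ω | rk (fun i => s i ω) j < k} = k := by
    calc ∑ j, P {ω | rk (fun i => s i ω) j < k}
        = ∑ j, ∫⁻ ω, {ω | rk (fun i => s i ω) j < k}.indicator 1 ω ∂P := by
          refine Finset.sum_congr rfl fun j _ => ?_
          rw [lintegral_indicator_one (hA j)]
      _ = ∫⁻ ω, ∑ j, {ω | rk (fun i => s i ω) j < k}.indicator 1 ω ∂P := by
          rw [lintegral_finsetSum]
          exact fun j _ => measurable_one.indicator (hA j)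
      _ = ∫⁻ ω, (k : ℝ≥0∞) ∂P := by
          apply lintegral_congr_ae
          filter_upwards [hdistinct] with ω hω
          have := rk_card (fun i => s i ω)
            (fun a b h => by by_contra hab; exact hω a b hab h) k (by omega)
          rw [← this]
          push_cast
          refine Finset.sum_congr rfl fun j _ => ?_
          rw [this]
          simp [Set.indicator_apply]
      _ = k := by simp
  rw [Finset.sum_congr rfl fun j _ => e2 j] at e3
  simp only [Finset.sum_const, Finset.card_univ, Fintype.card_fin, nsmul_eq_mul] at e3
  rw [ENNReal.eq_div_iff (by simp) (by simp [ENNReal.add_eq_top])]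
  exact_mod_cast e3
end

section
/- Fix N ≥ 1, K ≥ 1, and α ∈ (0,1) with α ≥ 1/(N+1), and set k = ⌈(1−α)(N+1)⌉. For each experiment index j = 1, …, K let (s^{(j)}_1, …, s^{(j)}_{N+1}) be exchangeable real-valued random variables whose N+1 values are almost surely pairwise distinct, and assume the K tuples are independent and identically distributed across j. Let B_j be the indicator of the event { s^{(j)}_{N+1} ≤ k-th smallest value among s^{(j)}_1, …, s^{(j)}_N }. Then the sum B_1 + ⋯ + B_K has the binomial distribution with K trials and success probability k/(N+1). -/
open MeasureTheory
open scoped Classical ENNReal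

theorem aux_sorted (a : ℝ) : ∀ (L : List ℝ), L.Pairwise (· ≤ ·) → ∀ i, (h : i < L.length) →
    (a ≤ L[i] ↔ L.countP (fun b => decide (b < a)) ≤ i) := by
  intro L
  induction L with
  | nil => intro _ i h; simp at h
  | cons b L ih =>
    intro hs i h
    rw [List.pairwise_cons] at hs
    obtain ⟨hb, hs⟩ := hs
    by_cases hba : b < a
    · rw [List.countP_cons_of_pos (by simpa using hba)]
      cases i with
      | zero => simp [hba]
      | succ i =>
        simp only [List.getElem_cons_succ]
        rw [ih hs i (by simpa using h)]
        omega
    · have h0 : (b :: L).countP (fun b => decide (b < a)) = 0 := by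
        rw [List.countP_eq_zero]
        intro c hc
        rcases List.mem_cons.1 hc with rfl | hc
        · simpa using hba
        · have := hb c hc
          simp; linarith
      rw [h0]
      simp only [Nat.zero_le, iff_true]
      cases i with
      | zero => simpa using hba
      | succ i =>
        simp only [List.getElem_cons_succ]
        exact (not_lt.1 hba).trans (hb _ (List.getElem_mem _))

theorem aux_kth (N k : ℕ) (hk : 1 ≤ k) (hkN : k ≤ N) (x : Fin (N + 1) → ℝ) :
    (x (Fin.last N) ≤ kthSmallest (List.ofFn fun i : Fin N => x i.castSucc) k) ↔
      (Finset.univ.filter fun i : Fin (N + 1) => x i < x (Fin.last N)).card < k := by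
  unfold kthSmallest
  set l := (List.ofFn fun i : Fin N => x i.castSucc) with hl
  set L := l.mergeSort (fun a b => @decide (a ≤ b) (Classical.propDecidable _)) with hL
  have hperm : L.Perm l := List.mergeSort_perm _ _
  have hlen : L.length = N := by rw [hperm.length_eq, hl, List.length_ofFn]
  have hs : L.Pairwise (· ≤ ·) := by
    have := List.pairwise_mergeSort (le := fun a b : ℝ => @decide (a ≤ b) (Classical.propDecidable _))
      (by intro a b c h1 h2; simp at *; linarith) (by intro a b; simp; exact le_total a b) l
    simpa using this
  have hlt : k - 1 < L.length := by omega
  rw [List.getD_eq_getElem _ _ hlt, aux_sorted _ L hs _ hlt, hperm.countP_eq]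
  have hc : l.countP (fun b => decide (b < x (Fin.last N))) =
      (Finset.univ.filter fun i : Fin (N + 1) => x i < x (Fin.last N)).card := by
    rw [Finset.card_filter, Fin.sum_univ_castSucc, hl, List.ofFn_eq_map, List.countP_map,
      List.countP_eq_length_filter]
    simp only [lt_irrefl, if_false, add_zero]
    rw [← Finset.card_filter, Finset.card_def, Finset.filter_val, Fin.univ_def]
    simp only [Multiset.filter_coe, Multiset.coe_card]
    congr 1
  rw [hc]
  omega

theorem aux_count (n k : ℕ) (hk : k ≤ n) (x : Fin n → ℝ) (hx : Function.Injective x) :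
    (Finset.univ.filter fun j : Fin n =>
      (Finset.univ.filter fun i : Fin n => x i < x j).card < k).card = k := by
  have hlt : ∀ j, (Finset.univ.filter fun i : Fin n => x i < x j).card < n := by
    intro j
    have : (Finset.univ.filter fun i : Fin n => x i < x j) ⊂ Finset.univ := by
      rw [Finset.filter_ssubset]
      exact ⟨j, Finset.mem_univ _, lt_irrefl _⟩
    simpa using Finset.card_lt_card this
  let f : Fin n → Fin n := fun j => ⟨_, hlt j⟩
  have hmono : ∀ a b, x a < x b → f a < f b := by
    intro a b hab
    change (Finset.univ.filter fun i : Fin n => x i < x a).card <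
      (Finset.univ.filter fun i : Fin n => x i < x b).card
    apply Finset.card_lt_card
    rw [Finset.ssubset_iff_of_subset]
    · exact ⟨a, by simpa using hab, by simp⟩
    · intro i hi
      simp at hi ⊢
      exact hi.trans hab
  have hinj : Function.Injective f := by
    intro a b hab
    by_contra hne
    rcases lt_or_gt_of_ne (hx.ne hne) with h | h
    · exact absurd hab (hmono _ _ h).ne
    · exact absurd hab (hmono _ _ h).ne'
  have hbij := Finite.injective_iff_bijective.1 hinj
  have : (Finset.univ.filter fun j : Fin n => (f j : ℕ) < k).card
      = (Finset.univ.filter fun j : Fin n => (j : ℕ) < k).card := by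
    apply Finset.card_bijective f hbij
    intro i; simp
  change (Finset.univ.filter fun j : Fin n => (f j : ℕ) < k).card = k
  rw [this, Fin.card_filter_val_lt]
  omega

theorem aux_meas (n k : ℕ) (j : Fin n) :
    MeasurableSet {x : Fin n → ℝ | (Finset.univ.filter fun i : Fin n => x i < x j).card < k} := by
  have : Measurable (fun x : Fin n → ℝ => (Finset.univ.filter fun i : Fin n => x i < x j).card) := by
    simp only [Finset.card_filter]
    refine Finset.measurable_sum _ fun i _ => ?_
    exact Measurable.ite (measurableSet_lt (measurable_pi_apply i) (measurable_pi_apply j))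
      measurable_const measurable_const
  exact this (measurableSet_Iio (a := k))

theorem aux_prob (n k : ℕ) (hk : k ≤ n + 1) (μ : Measure (Fin (n + 1) → ℝ)) [IsProbabilityMeasure μ]
    (hex : ∀ π : Equiv.Perm (Fin (n + 1)), μ.map (fun x i => x (π i)) = μ)
    (hd : ∀ᵐ x ∂μ, Function.Injective x) :
    μ {x | (Finset.univ.filter fun i : Fin (n + 1) => x i < x (Fin.last n)).card < k}
      = ENNReal.ofReal ((k : ℝ) / ((n : ℝ) + 1)) := by
  set A : Fin (n + 1) → Set (Fin (n + 1) → ℝ) :=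
    fun j => {x | (Finset.univ.filter fun i : Fin (n + 1) => x i < x j).card < k} with hA
  have hAm : ∀ j, MeasurableSet (A j) := fun j => aux_meas _ _ j
  have heq : ∀ j, μ (A j) = μ (A (Fin.last n)) := by
    intro j
    set π := Equiv.swap j (Fin.last n) with hπ
    conv_rhs => rw [← hex π]
    rw [Measure.map_apply (by fun_prop) (hAm _)]
    congr 1
    ext x
    simp only [hA, Set.mem_ofPred_eq, Set.mem_preimage]
    have h1 : π (Fin.last n) = j := Equiv.swap_apply_right _ _
    rw [h1]
    have : (Finset.univ.filter fun i : Fin (n + 1) => x (π i) < x j).card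
        = (Finset.univ.filter fun i : Fin (n + 1) => x i < x j).card := by
      apply Finset.card_bijective π π.bijective
      intro i; simp
    rw [this]
  have hsum : ∑ j, μ (A j) = k := by
    have h1 : ∀ j, μ (A j) = ∫⁻ x, (A j).indicator 1 x ∂μ := fun j =>
      (lintegral_indicator_one (hAm j)).symm
    simp only [h1]
    rw [← lintegral_finsetSum _ (fun j _ => measurable_one.indicator (hAm j))]
    rw [lintegral_congr_ae (g := fun _ => (k : ℝ≥0∞))]
    · simp
    · filter_upwards [hd] with x hx
      have := aux_count (n + 1) k hk x hx
      simp only [Set.indicator_apply, hA, Set.mem_ofPred_eq, Pi.one_apply]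
      rw [Finset.sum_boole, this]
  simp only [heq] at hsum
  simp only [Finset.sum_const, Finset.card_univ, Fintype.card_fin, nsmul_eq_mul] at hsum
  change μ (A (Fin.last n)) = _
  rw [ENNReal.ofReal_div_of_pos (by positivity), ENNReal.ofReal_natCast,
    ENNReal.eq_div_iff (by simp; positivity) (by simp), ← hsum]
  congr 1
  rw [← Nat.cast_succ, ENNReal.ofReal_natCast]

theorem aux_meas2 {X : Type*} [MeasurableSpace X] (K : ℕ) (A : Set X) (hA : MeasurableSet A)
    (m : ℕ) :
    MeasurableSet {y : Fin K → X | (Finset.univ.filter fun j => y j ∈ A).card = m} := by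
  have : Measurable (fun y : Fin K → X => (Finset.univ.filter fun j => y j ∈ A).card) := by
    simp only [Finset.card_filter]
    refine Finset.measurable_sum _ fun i _ => ?_
    exact Measurable.ite (measurable_pi_apply i hA) measurable_const measurable_const
  exact this (measurableSet_singleton m)

theorem aux_binom {X : Type*} [MeasurableSpace X] (K : ℕ) (μ : Measure X) [IsProbabilityMeasure μ]
    (A : Set X) (hA : MeasurableSet A) (p : ℝ) (hp0 : 0 ≤ p) (hp1 : p ≤ 1)
    (hp : μ A = ENNReal.ofReal p) (m : ℕ) :
    Measure.pi (fun _ : Fin K => μ) {y | (Finset.univ.filter fun j => y j ∈ A).card = m}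
      = ENNReal.ofReal ((K.choose m : ℝ) * p ^ m * (1 - p) ^ (K - m)) := by
  have hc : μ Aᶜ = ENNReal.ofReal (1 - p) := by
    rw [prob_compl_eq_one_sub hA, hp, ENNReal.ofReal_sub _ hp0, ENNReal.ofReal_one]
  let C : Finset (Fin K) → Set (Fin K → X) := fun S => Set.univ.pi fun j => if j ∈ S then A else Aᶜ
  have hC : ∀ S y, y ∈ C S ↔ (Finset.univ.filter fun j => y j ∈ A) = S := by
    intro S y
    simp only [C, Set.mem_univ_pi, Finset.ext_iff, Finset.mem_filter, Finset.mem_univ, true_and]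
    refine forall_congr' fun j => ?_
    by_cases h : j ∈ S <;> simp [h]
  have hset : {y : Fin K → X | (Finset.univ.filter fun j => y j ∈ A).card = m}
      = ⋃ S ∈ Finset.powersetCard m (Finset.univ : Finset (Fin K)), C S := by
    ext y
    simp [hC]
  rw [hset, measure_biUnion_finset]
  · have : ∀ S ∈ Finset.powersetCard m (Finset.univ : Finset (Fin K)),
        Measure.pi (fun _ : Fin K => μ) (C S) = ENNReal.ofReal (p ^ m * (1 - p) ^ (K - m)) := by
      intro S hS
      have hS := (Finset.mem_powersetCard.1 hS).2
      rw [Measure.pi_pi]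
      have : ∀ j, μ (if j ∈ S then A else Aᶜ)
          = if j ∈ S then ENNReal.ofReal p else ENNReal.ofReal (1 - p) := by
        intro j; split_ifs <;> assumption
      simp only [this]
      rw [Finset.prod_ite, Finset.prod_const, Finset.prod_const, ENNReal.ofReal_mul (by positivity),
        ENNReal.ofReal_pow hp0, ENNReal.ofReal_pow (by linarith)]
      have e1 : (Finset.univ.filter fun j => j ∈ S) = S := by ext; simp
      have e2 : (Finset.univ.filter fun j => j ∉ S) = Sᶜ := by ext; simp
      rw [e1, e2, Finset.card_compl, hS, Fintype.card_fin]
    rw [Finset.sum_congr rfl this, Finset.sum_const, Finset.card_powersetCard, Finset.card_univ,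
      Fintype.card_fin, nsmul_eq_mul, mul_assoc,
      ENNReal.ofReal_mul (p := (K.choose m : ℝ)) (by positivity),
      ENNReal.ofReal_natCast]
  · intro S _ T _ hST
    rw [Function.onFun, Set.disjoint_left]
    intro y h1 h2
    exact hST (((hC _ _).1 h1).symm.trans ((hC _ _).1 h2))
  · intro S _
    refine MeasurableSet.univ_pi fun j => ?_
    split_ifs
    exacts [hA, hA.compl]

/-- Binomial law of the empirical coverage over `K` i.i.d. conformal experiments.
With `k = ⌈(1-α)(N+1)⌉`, the number of experiments `j` in which
`s j (N+1) ≤ (k-th smallest of s j 1, …, s j N)` is binomial with `K` trials and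
success probability `k/(N+1)`: for every `m`, the probability that exactly `m`
experiments succeed is `C(K,m) (k/(N+1))^m (1-k/(N+1))^(K-m)`. -/
theorem empirical_coverage_binomial
    {Ω : Type*} [MeasurableSpace Ω] (P : Measure Ω) [IsProbabilityMeasure P]
    (N K : ℕ) (hN : 1 ≤ N) (hK : 1 ≤ K)
    (α : ℝ) (hα0 : 0 < α) (hα1 : α < 1) (hαN : 1 / ((N : ℝ) + 1) ≤ α)
    (s : Fin K → Fin (N + 1) → Ω → ℝ)
    (hmeas : ∀ j i, Measurable (s j i))
    (hindep : Measure.map (fun ω (j : Fin K) (i : Fin (N + 1)) => s j i ω) P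
      = Measure.pi fun j => Measure.map (fun ω i => s j i ω) P)
    (hident : ∀ j j' : Fin K,
      Measure.map (fun ω i => s j i ω) P = Measure.map (fun ω i => s j' i ω) P)
    (hexch : ∀ j, Exchangeable P (s j))
    (hdistinct : ∀ j, ∀ᵐ ω ∂P, ∀ i i' : Fin (N + 1), i ≠ i' → s j i ω ≠ s j i' ω) :
    ∀ m : ℕ,
      P {ω | (Finset.univ.filter fun j : Fin K =>
          s j (Fin.last N) ω ≤
            kthSmallest (List.ofFn fun i : Fin N => s j i.castSucc ω)
              ⌈(1 - α) * ((N : ℝ) + 1)⌉₊).card = m}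
        = ENNReal.ofReal ((K.choose m : ℝ)
            * ((⌈(1 - α) * ((N : ℝ) + 1)⌉₊ : ℝ) / ((N : ℝ) + 1)) ^ m
            * (1 - (⌈(1 - α) * ((N : ℝ) + 1)⌉₊ : ℝ) / ((N : ℝ) + 1)) ^ (K - m)) := by
  intro m
  set k := ⌈(1 - α) * ((N : ℝ) + 1)⌉₊ with hkdef
  have hN1 : (0 : ℝ) < (N : ℝ) + 1 := by positivity
  have hk1 : 1 ≤ k := Nat.ceil_pos.2 (mul_pos (by linarith) hN1)
  have hkN : k ≤ N := by
    apply Nat.ceil_le.2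
    rw [div_le_iff₀ hN1] at hαN
    linarith
  let j0 : Fin K := ⟨0, hK⟩
  have hm : ∀ j, Measurable (fun ω i => s j i ω) := fun j => measurable_pi_lambda _ (hmeas j)
  set μ := Measure.map (fun ω i => s j0 i ω) P with hμ
  have : IsProbabilityMeasure μ := Measure.isProbabilityMeasure_map (hm j0).aemeasurable
  have hpi : Measure.map (fun ω (j : Fin K) (i : Fin (N + 1)) => s j i ω) P
      = Measure.pi fun _ : Fin K => μ := by
    rw [hindep]
    congr 1
    funext j
    exact hident j j0
  set A : Set (Fin (N + 1) → ℝ) :=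
    {x | (Finset.univ.filter fun i : Fin (N + 1) => x i < x (Fin.last N)).card < k} with hA
  have hAm : MeasurableSet A := aux_meas _ _ _
  have hinjm : MeasurableSet {x : Fin (N + 1) → ℝ | Function.Injective x} := by
    have : {x : Fin (N + 1) → ℝ | Function.Injective x}
        = ⋂ i, ⋂ i', {x | x i = x i' → i = i'} := by
      ext x; simp [Function.Injective]
    rw [this]
    refine MeasurableSet.iInter fun i => MeasurableSet.iInter fun i' => ?_
    by_cases h : i = i'
    · simp [h]
    · simp only [h, imp_false]
      exact (measurableSet_eq_fun (measurable_pi_apply i) (measurable_pi_apply i')).compl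
  have hpA : μ A = ENNReal.ofReal ((k : ℝ) / ((N : ℝ) + 1)) := by
    apply aux_prob N k (by omega) μ
    · intro π
      rw [hμ, Measure.map_map (by fun_prop) (hm j0)]
      exact hexch j0 π
    · rw [hμ, ae_map_iff (hm j0).aemeasurable hinjm]
      filter_upwards [hdistinct j0] with ω hω
      intro i i' h
      by_contra hne
      exact hω i i' hne h
  have hkr : (k : ℝ) ≤ N := by exact_mod_cast hkN
  have key := aux_binom K μ A hAm ((k : ℝ) / ((N : ℝ) + 1)) (by positivity)
    (by rw [div_le_one hN1]; linarith) hpA m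
  rw [← key, ← hpi, Measure.map_apply]
  · congr 1
    ext ω
    simp only [Set.mem_ofPred_eq, Set.mem_preimage, hA]
    have : ∀ j, _ := fun j => aux_kth N k hk1 hkN (fun i => s j i ω)
    simp only [this]
  · exact measurable_pi_lambda _ hm
  · exact aux_meas2 K A hAm m
end

section
/- (Unified validity of conformal prediction with randomized scores) Let Z and V be measurable spaces, let μ be a probability measure on Z^{N+1} invariant under every permutation of the N+1 coordinates, and let κ be a Markov kernel from Z to V. Let (z_1, ν_1), …, (z_{N+1}, ν_{N+1}) have the joint distribution obtained by drawing (z_1, …, z_{N+1}) ∼ μ and then, conditionally independently given the z's, drawing ν_i ∼ κ(z_i, ·). Let t : Z × V → ℝ be measurable, let α ∈ (0,1) satisfy α ≥ 1/(N+1), and set k = ⌈(1−α)(N+1)⌉. Then Pr( t(z_{N+1}, ν_{N+1}) ≤ k-th smallest value among t(z_1, ν_1), …, t(z_N, ν_N) ) ≥ 1 − α. -/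
open MeasureTheory ProbabilityTheory

lemma aux_count_s6 (n k : ℕ) (f : Fin n → ℝ) (hk : k ≤ n) :
    k ≤ ∑ j, if (∑ i, if f i < f j then 1 else 0) < k then 1 else 0 := by
  simp only [← Finset.card_filter]
  by_cases hB : (Finset.univ.filter fun j => ¬ (Finset.univ.filter fun i => f i < f j).card < k).Nonempty
  · obtain ⟨j, hj, hmin⟩ := Finset.exists_min_image _ f hB
    rw [Finset.mem_filter, not_lt] at hj
    refine hj.2.trans (Finset.card_le_card fun i hi => ?_)
    rw [Finset.mem_filter] at hi ⊢
    refine ⟨Finset.mem_univ _, ?_⟩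
    by_contra h
    exact absurd (hmin i (by simpa using h)) (not_le.2 hi.2)
  · rw [Finset.not_nonempty_iff_eq_empty, Finset.filter_eq_empty_iff] at hB
    rw [Finset.filter_true_of_mem (fun x hx => not_not.1 (hB hx))]
    simpa using hk

lemma aux_kth_s6 (N k : ℕ) (f : Fin (N + 1) → ℝ) (hk1 : 1 ≤ k) (hk : k ≤ N)
    (h : (∑ i, if f i < f (Fin.last N) then 1 else 0) < k) :
    f (Fin.last N) ≤ kthSmallest (List.ofFn fun i : Fin N => f i.castSucc) k := by
  classical
  rw [Fin.sum_univ_castSucc] at h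
  simp only [lt_irrefl, if_false, add_zero] at h
  set l := List.ofFn fun i : Fin N => f i.castSucc with hl
  set c := f (Fin.last N)
  have hcount : (∑ i : Fin N, if f i.castSucc < c then 1 else 0) = l.countP (fun x => x < c) := by
    rw [hl, List.ofFn_eq_map, List.countP_map, ← Finset.card_filter]
    rw [← Finset.length_toList, List.countP_eq_length_filter]
    apply List.Perm.length_eq
    rw [List.perm_ext_iff_of_nodup (Finset.nodup_toList _) ((List.nodup_finRange N).filter _)]
    intro a; simp
  rw [hcount] at h
  unfold kthSmallest
  set s := l.mergeSort (fun a b => @decide (a ≤ b) (Classical.propDecidable _)) with hs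
  have hperm : s.Perm l := List.mergeSort_perm _ _
  have hsort : s.Pairwise (· ≤ ·) := by
    have := List.pairwise_mergeSort (le := fun a b : ℝ => @decide (a ≤ b) (Classical.propDecidable _))
      (fun a b c h1 h2 => by simp at *; exact h1.trans h2) (fun a b => by simpa using le_total a b) l
    simpa using this
  have hlen : s.length = N := by rw [hperm.length_eq, hl, List.length_ofFn]
  rw [← hperm.countP_eq] at h
  by_contra hc
  rw [not_le, List.getD_eq_getElem _ _ (by omega)] at hc
  have h2 : (s.take k).countP (fun x => x < c) = (s.take k).length := by
    rw [List.countP_eq_length]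
    intro a ha
    obtain ⟨i, hi, rfl⟩ := List.getElem_of_mem ha
    rw [List.length_take] at hi
    rw [List.getElem_take]
    simp only [decide_eq_true_eq]
    refine lt_of_le_of_lt ?_ hc
    rcases Nat.lt_or_ge i (k-1) with h3 | h3
    · exact List.pairwise_iff_getElem.1 hsort i (k-1) _ _ h3
    · have : i = k - 1 := by omega
      subst this; exact le_rfl
  have h3 := (List.take_sublist k s).countP_le (p := fun x => x < c)
  rw [h2, List.length_take] at h3
  omega

lemma aux_pi_meas {Z W : Type*} [MeasurableSpace Z] [MeasurableSpace W] {n : ℕ}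
    (η : Kernel Z W) [IsMarkovKernel η] :
    Measurable fun z : Fin n → Z => Measure.pi fun i => η (z i) := by
  refine Measurable.measure_of_isPiSystem_of_isProbabilityMeasure
    generateFrom_pi.symm isPiSystem_pi ?_
  rintro _ ⟨s, hs, rfl⟩
  simp only [Measure.pi_pi]
  refine Finset.measurable_prod _ fun i _ => ?_
  exact (η.measurable_coe (hs i (Set.mem_univ i))).comp (measurable_pi_apply i)

lemma aux_pi_perm {W : Type*} [MeasurableSpace W] {n : ℕ}
    (m : Fin n → Measure W) [∀ i, IsProbabilityMeasure (m i)] (π : Equiv.Perm (Fin n)) :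
    (Measure.pi m).map (fun w i => w (π i)) = Measure.pi fun i => m (π i) := by
  symm
  apply Measure.pi_eq
  intro (s : Fin n → Set W) hs
  rw [Measure.map_apply (by fun_prop) (MeasurableSet.univ_pi hs)]
  have : (fun (w : Fin n → W) i => w (π i)) ⁻¹' Set.univ.pi s
      = Set.univ.pi fun i => s (π.symm i) := by
    ext w
    simp only [Set.mem_preimage, Set.mem_univ_pi]
    constructor
    · intro h i; simpa using h (π.symm i)
    · intro h i; have := h (π i); rwa [Equiv.symm_apply_apply] at this
  rw [this, Measure.pi_pi, ← Equiv.prod_comp π]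
  exact Finset.prod_congr rfl fun i _ => by rw [Equiv.symm_apply_apply]

lemma aux_exch {Z W : Type*} [MeasurableSpace Z] [MeasurableSpace W] {n : ℕ}
    (μ : Measure (Fin n → Z))
    (hinv : ∀ π : Equiv.Perm (Fin n), Measure.map (fun (z : Fin n → Z) i => z (π i)) μ = μ)
    (η : Kernel Z W) [IsMarkovKernel η] (π : Equiv.Perm (Fin n))
    {S : Set (Fin n → W)} (hS : MeasurableSet S) :
    (μ.bind fun z => Measure.pi fun i => η (z i)) ((fun w i => w (π i)) ⁻¹' S)
      = (μ.bind fun z => Measure.pi fun i => η (z i)) S := by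
  have hm : Measurable (fun (w : Fin n → W) i => w (π i)) := by fun_prop
  rw [Measure.bind_apply (hm hS) (aux_pi_meas η).aemeasurable,
    Measure.bind_apply hS (aux_pi_meas η).aemeasurable]
  conv_rhs => rw [← hinv π]
  have hF : Measurable fun z : Fin n → Z => (Measure.pi fun i => η (z i)) S :=
    (Measure.measurable_coe hS).comp (aux_pi_meas η)
  rw [lintegral_map hF (by fun_prop)]
  refine lintegral_congr fun z => ?_
  rw [← Measure.map_apply hm hS, aux_pi_perm]

lemma aux_main {W : Type*} [MeasurableSpace W] (N k : ℕ)
    (P : Measure (Fin (N + 1) → W)) [IsProbabilityMeasure P]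
    (hP : ∀ (π : Equiv.Perm (Fin (N + 1))) (S : Set (Fin (N + 1) → W)), MeasurableSet S →
      P ((fun w i => w (π i)) ⁻¹' S) = P S)
    (t : W → ℝ) (ht : Measurable t) (hk : k ≤ N + 1) :
    (k : ENNReal) ≤ (N + 1 : ℕ) *
      P {w | (∑ i, if t (w i) < t (w (Fin.last N)) then 1 else 0) < k} := by
  let A : Fin (N + 1) → Set (Fin (N + 1) → W) :=
    fun j => {w | (∑ i, if t (w i) < t (w j) then 1 else 0) < k}
  have hA : ∀ j, MeasurableSet (A j) := by
    intro j
    refine measurableSet_lt (Finset.measurable_sum _ fun i _ => ?_) measurable_const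
    exact Measurable.ite (measurableSet_lt (by fun_prop) (by fun_prop))
      measurable_const measurable_const
  have hAP : ∀ j, P (A j) = P (A (Fin.last N)) := by
    intro j
    rw [← hP (Equiv.swap j (Fin.last N)) _ (hA (Fin.last N))]
    congr 1
    ext w
    simp only [A, Set.mem_ofPred_eq, Set.mem_preimage, Equiv.swap_apply_right]
    rw [Equiv.sum_comp (Equiv.swap j (Fin.last N)) (fun i => if t (w i) < t (w j) then 1 else 0)]
  calc (k : ENNReal) = ∫⁻ _, (k : ENNReal) ∂P := by simp
    _ ≤ ∫⁻ w, ∑ j, (A j).indicator 1 w ∂P := by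
      refine lintegral_mono fun w => ?_
      have := aux_count_s6 (N + 1) k (fun i => t (w i)) hk
      have h2 : ((k : ℕ) : ENNReal) ≤ _ := Nat.cast_le.2 this
      refine h2.trans (le_of_eq ?_)
      push_cast
      refine Finset.sum_congr rfl fun j _ => ?_
      simp [Set.indicator_apply, A]
    _ = ∑ j, P (A j) := by
      rw [lintegral_finsetSum _ fun j _ => measurable_one.indicator (hA j)]
      simp [hA]
    _ = (N + 1 : ℕ) * P (A (Fin.last N)) := by simp [hAP, -Nat.cast_add]

/-- Unified validity of conformal prediction with randomized scores: let `μ` be a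
permutation-invariant probability measure on `Z^(N+1)`, `κ` a Markov kernel from `Z`
to `V`, and draw `(z 1, …, z (N+1)) ∼ μ`, then conditionally independently
`ν i ∼ κ (z i)`. For measurable `t : Z × V → ℝ`, `α ∈ (0,1)` with `α ≥ 1/(N+1)` and
`k = ⌈(1-α)(N+1)⌉`, the probability that `t (z (N+1), ν (N+1))` is at most the
`k`-th smallest of `t (z 1, ν 1), …, t (z N, ν N)` is at least `1 - α`. -/
theorem conformal_randomized_scores_validity
    {Z V : Type*} [MeasurableSpace Z] [MeasurableSpace V] (N : ℕ)
    (μ : Measure (Fin (N + 1) → Z)) [IsProbabilityMeasure μ]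
    (hinv : ∀ π : Equiv.Perm (Fin (N + 1)),
      Measure.map (fun (z : Fin (N + 1) → Z) i => z (π i)) μ = μ)
    (κ : Kernel Z V) [IsMarkovKernel κ]
    (t : Z × V → ℝ) (ht : Measurable t)
    (α : ℝ) (hα0 : 0 < α) (hα1 : α < 1) (hαN : 1 / ((N : ℝ) + 1) ≤ α) :
    ENNReal.ofReal (1 - α) ≤
      (μ.bind fun z =>
        Measure.map (fun (v : Fin (N + 1) → V) i => (z i, v i))
          (Measure.pi fun i => κ (z i)))
      {w : Fin (N + 1) → Z × V |
        t (w (Fin.last N)) ≤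
          kthSmallest (List.ofFn fun i : Fin N => t (w i.castSucc))
            ⌈(1 - α) * ((N : ℝ) + 1)⌉₊} := by
  classical
  let η : Kernel Z (Z × V) := Kernel.id ×ₖ κ
  have hη : ∀ z : Fin (N + 1) → Z,
      Measure.map (fun (v : Fin (N + 1) → V) i => (z i, v i)) (Measure.pi fun i => κ (z i))
        = Measure.pi fun i => η (z i) := by
    intro z
    have : ∀ i, η (z i) = (κ (z i)).map (Prod.mk (z i)) := by
      intro i
      simp only [η, Kernel.prod_apply, Kernel.id_apply, Measure.dirac_prod]
    simp only [this]
    have hsf : ∀ i, IsProbabilityMeasure ((κ (z i)).map (Prod.mk (z i))) := fun i =>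
      Measure.isProbabilityMeasure_map (by fun_prop)
    exact Measure.pi_map_pi (μ := fun i => κ (z i)) (f := fun i => Prod.mk (z i))
      (fun i => by fun_prop)
  simp only [hη]
  set P := μ.bind fun z => Measure.pi fun i => η (z i) with hPdef
  have : IsProbabilityMeasure P := by
    constructor
    rw [hPdef, Measure.bind_apply MeasurableSet.univ (aux_pi_meas η).aemeasurable]
    simp
  set k := ⌈(1 - α) * ((N : ℝ) + 1)⌉₊ with hk
  have hN : (0 : ℝ) < (N : ℝ) + 1 := by positivity
  have hk1 : 1 ≤ k := Nat.one_le_ceil_iff.2 (by apply mul_pos <;> linarith)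
  have hkN : k ≤ N := by
    rw [hk, Nat.ceil_le]
    rw [div_le_iff₀ hN] at hαN
    linarith
  have key := aux_main N k P (fun π S hS => aux_exch μ hinv η π hS) t ht (by omega)
  have hmono : P {w | (∑ i, if t (w i) < t (w (Fin.last N)) then 1 else 0) < k} ≤
      P {w : Fin (N + 1) → Z × V |
        t (w (Fin.last N)) ≤ kthSmallest (List.ofFn fun i : Fin N => t (w i.castSucc)) k} :=
    measure_mono fun w hw => aux_kth_s6 N k (fun i => t (w i)) hk1 hkN hw
  refine le_trans ?_ hmono
  have h1 : ENNReal.ofReal (1 - α) * (N + 1 : ℕ) ≤ k := by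
    rw [← ENNReal.ofReal_natCast, ← ENNReal.ofReal_natCast k, ← ENNReal.ofReal_mul (by linarith)]
    apply ENNReal.ofReal_le_ofReal
    push_cast
    exact Nat.le_ceil _
  have h2 := h1.trans key
  rw [mul_comm] at h2
  exact (ENNReal.mul_le_mul_iff_right (by simp) (ENNReal.natCast_ne_top _)).1 h2
end

section
/- (Validity of conventional split conformal prediction) Let X and Y be measurable spaces, let (x_1, y_1), …, (x_N, y_N), (x, y) be i.i.d. random pairs with values in X × Y, and let s : X × Y → ℝ be a measurable scoring function. Let α ∈ (0,1) satisfy α ≥ 1/(N+1) and let Q_{1−α} be the ⌈(1−α)(N+1)⌉-th smallest value among the calibration scores s(x_1, y_1), …, s(x_N, y_N). Define the set predictor Γ(x) = { y' ∈ Y : s(x, y') ≤ Q_{1−α} }. Then Pr( y ∈ Γ(x) ) ≥ 1 − α, where the probability is over the calibration pairs and the test pair. -/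
open MeasureTheory

theorem le_kthSmallest_aux (l : List ℝ) (k : ℕ) (t : ℝ) (hk : 1 ≤ k) (hkl : k ≤ l.length)
    (h : l.countP (fun a => decide (a < t)) < k) : t ≤ kthSmallest l k := by
  unfold kthSmallest
  set r : ℝ → ℝ → Bool := fun a b => @decide (a ≤ b) (Classical.propDecidable _) with hr
  have hsort : (l.mergeSort r).Pairwise (fun a b => r a b = true) := by
    apply List.pairwise_mergeSort
    · intro a b c hab hbc
      simp only [hr, decide_eq_true_eq] at *
      exact le_trans hab hbc
    · intro a b
      simp only [hr, Bool.or_eq_true, decide_eq_true_eq]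
      exact le_total a b
  have hperm : (l.mergeSort r).Perm l := List.mergeSort_perm l r
  rw [← hperm.countP_eq] at h
  rw [← hperm.length_eq] at hkl
  generalize l.mergeSort r = m at *
  by_contra hlt
  push Not at hlt
  have hk' : k - 1 < m.length := by omega
  rw [List.getD_eq_getElem _ _ hk'] at hlt
  have h1 : (m.take k).countP (fun a => decide (a < t)) = (m.take k).length := by
    rw [List.countP_eq_length]
    intro a ha
    obtain ⟨i, hi, rfl⟩ := List.mem_iff_getElem.1 ha
    rw [List.length_take] at hi
    rw [List.getElem_take]
    simp only [decide_eq_true_eq]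
    refine lt_of_le_of_lt ?_ hlt
    rcases Nat.lt_or_ge i (k - 1) with hik | hik
    · have := List.pairwise_iff_getElem.1 hsort i (k - 1) (by omega) hk' hik
      simpa only [hr, decide_eq_true_eq] using this
    · have : i = k - 1 := by omega
      subst this
      exact le_rfl
  have h2 := (List.take_sublist k m).countP_le (p := fun a => decide (a < t))
  rw [h1, List.length_take] at h2
  omega

theorem rank_count_aux (n k : ℕ) (hk : k ≤ n) (v : Fin n → ℝ) :
    k ≤ (Finset.univ.filter fun j : Fin n =>
      (Finset.univ.filter fun i : Fin n => v i < v j).card < k).card := by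
  have hmono := Tuple.monotone_sort v
  set σ := Tuple.sort v
  have : (Finset.univ.image (fun m : Fin k => σ (Fin.castLE hk m))).card = k := by
    rw [Finset.card_image_of_injective]
    · simp
    · exact σ.injective.comp (Fin.castLE_injective hk)
  refine this.symm.le.trans (Finset.card_le_card ?_)
  intro j hj
  simp only [Finset.mem_image, Finset.mem_univ, true_and] at hj
  obtain ⟨m, rfl⟩ := hj
  simp only [Finset.mem_filter, Finset.mem_univ, true_and]
  have hsub : (Finset.univ.filter fun i : Fin n => v i < v (σ (Fin.castLE hk m))) ⊆
      (Finset.Iio (Fin.castLE hk m)).image σ := by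
    intro i hi
    simp only [Finset.mem_filter, Finset.mem_univ, true_and] at hi
    simp only [Finset.mem_image, Finset.mem_Iio]
    refine ⟨σ.symm i, ?_, by simp⟩
    by_contra hc
    push Not at hc
    have := hmono hc
    simp only [Function.comp, Equiv.apply_symm_apply] at this
    exact absurd hi (not_lt.2 this)
  refine lt_of_le_of_lt ((Finset.card_le_card hsub).trans Finset.card_image_le) ?_
  simp

theorem meas_aux {Z : Type*} [MeasurableSpace Z] (n k : ℕ) (s : Z → ℝ) (hs : Measurable s)
    (j : Fin n) : MeasurableSet {z : Fin n → Z |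
      (Finset.univ.filter fun i : Fin n => s (z i) < s (z j)).card < k} := by
  have : Measurable fun z : Fin n → Z =>
      (Finset.univ.filter fun i : Fin n => s (z i) < s (z j)).card := by
    simp only [Finset.card_filter]
    refine Finset.measurable_sum _ fun i _ => ?_
    refine Measurable.ite ?_ measurable_const measurable_const
    exact measurableSet_lt (hs.comp (measurable_pi_apply i)) (hs.comp (measurable_pi_apply j))
  exact this (measurableSet_Iio (a := k))

theorem perm_aux {Z : Type*} [MeasurableSpace Z] (n : ℕ) (ν : Measure Z) [IsProbabilityMeasure ν]
    (e : Equiv.Perm (Fin n)) :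
    Measure.map (fun (z : Fin n → Z) i => z (e i)) (Measure.pi fun _ => ν)
      = Measure.pi fun _ => ν := by
  symm
  apply Measure.pi_eq
  intro t ht
  rw [Measure.map_apply (by fun_prop) (MeasurableSet.univ_pi ht)]
  have : (fun (z : Fin n → Z) i => z (e i)) ⁻¹' (Set.univ.pi t)
      = Set.univ.pi (fun i => t (e.symm i)) := by
    ext z
    simp only [Set.mem_preimage, Set.mem_pi, Set.mem_univ, true_imp_iff]
    constructor
    · intro h i
      simpa using h (e.symm i)
    · intro h i
      have h3 := h (e i)
      rwa [Equiv.symm_apply_apply] at h3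
  rw [this, Measure.pi_pi]
  exact Equiv.prod_comp e.symm (fun i => ν (t i))

theorem exch_aux {Z : Type*} [MeasurableSpace Z] (n k : ℕ) (hk : k ≤ n)
    (ν : Measure Z) [IsProbabilityMeasure ν]
    (s : Z → ℝ) (hs : Measurable s) (j₀ : Fin n) :
    (k : ENNReal) ≤ n * (Measure.pi fun _ : Fin n => ν) {z : Fin n → Z |
      (Finset.univ.filter fun i : Fin n => s (z i) < s (z j₀)).card < k} := by
  set E : Fin n → Set (Fin n → Z) := fun j => {z : Fin n → Z |
      (Finset.univ.filter fun i : Fin n => s (z i) < s (z j)).card < k} with hE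
  have hEm : ∀ j, MeasurableSet (E j) := fun j => meas_aux n k s hs j
  set π := (Measure.pi fun _ : Fin n => ν) with hπ
  have heq : ∀ j, π (E j) = π (E j₀) := by
    intro j
    conv_rhs => rw [hπ, ← perm_aux n ν (Equiv.swap j j₀)]
    rw [Measure.map_apply (by fun_prop) (hEm j₀)]
    congr 1
    ext z
    simp only [hE, Set.mem_preimage, Set.mem_setOf_eq, Equiv.swap_apply_right]
    have : (Finset.univ.filter fun i : Fin n => s (z i) < s (z j)).card =
        (Finset.univ.filter fun i : Fin n => s (z (Equiv.swap j j₀ i)) < s (z j)).card := by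
      simp only [Finset.card_filter]
      exact (Equiv.sum_comp (Equiv.swap j j₀) (fun i => if s (z i) < s (z j) then 1 else 0)).symm
    rw [this]
  have hsum : ∑ j, π (E j) = n * π (E j₀) := by
    simp [heq]
  change _ ≤ n * π (E j₀)
  rw [← hsum]
  have h1 : ∑ j, π (E j) = ∫⁻ z, ∑ j, (E j).indicator 1 z ∂π := by
    rw [lintegral_finsetSum _ (fun j _ => measurable_one.indicator (hEm j))]
    simp [lintegral_indicator_one, hEm]
  rw [h1]
  calc (k : ENNReal) = ∫⁻ _, (k : ENNReal) ∂π := by simp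
    _ ≤ _ := by
      refine lintegral_mono fun z => ?_
      have := rank_count_aux n k hk (fun i => s (z i))
      rw [Finset.card_filter] at this
      have h2 : (k : ENNReal) ≤ ((∑ j, if z ∈ E j then 1 else 0 : ℕ) : ENNReal) := by
        exact_mod_cast this
      refine h2.trans (le_of_eq ?_)
      push_cast
      simp [Set.indicator_apply]

/-- Validity of conventional split conformal prediction: let the calibration pairs
`(x i, y i)`, `i = 1, …, N`, and the test pair `(x (N+1), y (N+1))` be i.i.d. with
common law `ν`, let `s` be a measurable scoring function, `α ∈ (0,1)` with
`α ≥ 1/(N+1)`, and let `Q` be the `⌈(1-α)(N+1)⌉`-th smallest calibration score.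
Then the set predictor `Γ(x) = {y' | s (x, y') ≤ Q}` satisfies
`Pr(y (N+1) ∈ Γ(x (N+1))) ≥ 1 - α`. -/
theorem split_conformal_validity
    {X Y : Type*} [MeasurableSpace X] [MeasurableSpace Y]
    {Ω : Type*} [MeasurableSpace Ω] (P : Measure Ω) [IsProbabilityMeasure P]
    (N : ℕ) (x : Fin (N + 1) → Ω → X) (y : Fin (N + 1) → Ω → Y)
    (hmeas : ∀ i, Measurable fun ω => (x i ω, y i ω))
    (ν : Measure (X × Y)) [IsProbabilityMeasure ν]
    (hiid : Measure.map (fun ω (i : Fin (N + 1)) => (x i ω, y i ω)) P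
      = Measure.pi fun _ => ν)
    (s : X × Y → ℝ) (hs : Measurable s)
    (α : ℝ) (hα0 : 0 < α) (hα1 : α < 1) (hαN : 1 / ((N : ℝ) + 1) ≤ α) :
    ENNReal.ofReal (1 - α) ≤
      P {ω | y (Fin.last N) ω ∈
        {y' : Y | s (x (Fin.last N) ω, y') ≤
          kthSmallest (List.ofFn fun i : Fin N => s (x i.castSucc ω, y i.castSucc ω))
            ⌈(1 - α) * ((N : ℝ) + 1)⌉₊}} := by
  have hN : (0:ℝ) < (N:ℝ) + 1 := by positivity
  set k := ⌈(1 - α) * ((N : ℝ) + 1)⌉₊ with hkdef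
  have hk1 : 1 ≤ k := Nat.one_le_iff_ne_zero.2 (Nat.ceil_pos.2 (by nlinarith)).ne'
  have hkN : k ≤ N := by
    rw [hkdef, Nat.ceil_le]
    rw [div_le_iff₀ hN] at hαN
    linarith
  have hkα : (1 - α) * ((N : ℝ) + 1) ≤ k := Nat.le_ceil _
  have hex := exch_aux (N + 1) k (by omega) ν s hs (Fin.last N)
  have hm : Measurable (fun ω (i : Fin (N + 1)) => (x i ω, y i ω)) :=
    measurable_pi_lambda _ hmeas
  rw [← hiid, Measure.map_apply hm (meas_aux (N + 1) k s hs (Fin.last N))] at hex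
  set A := (fun ω (i : Fin (N + 1)) => (x i ω, y i ω)) ⁻¹' {z : Fin (N + 1) → X × Y |
      (Finset.univ.filter fun i : Fin (N + 1) => s (z i) < s (z (Fin.last N))).card < k} with hA
  have hle : ENNReal.ofReal (1 - α) ≤ P A := by
    have h1 : ((N + 1 : ℕ) : ENNReal) * ENNReal.ofReal (1 - α) ≤ ((N + 1 : ℕ) : ENNReal) * P A := by
      refine le_trans ?_ hex
      rw [← ENNReal.ofReal_natCast (N + 1), ← ENNReal.ofReal_natCast k,
        ← ENNReal.ofReal_mul (by positivity)]
      apply ENNReal.ofReal_le_ofReal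
      push_cast
      linarith
    exact (ENNReal.mul_le_mul_iff_right (by simp) (by simp)).1 h1
  refine hle.trans (measure_mono ?_)
  intro ω hω
  simp only [hA, Set.mem_preimage, Set.mem_setOf_eq] at hω
  simp only [Set.mem_setOf_eq]
  apply le_kthSmallest_aux _ _ _ hk1 (by simpa using hkN)
  refine lt_of_eq_of_lt ?_ hω
  rw [Finset.card_filter, Fin.sum_univ_castSucc, ← Finset.card_filter]
  simp only [lt_irrefl, if_false, add_zero]
  rw [List.ofFn_eq_map, List.countP_map, List.countP_eq_length_filter]
  rw [← List.toFinset_card_of_nodup ((List.nodup_finRange N).filter _)]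
  congr 1
  ext i
  simp
end

section
/- (Calibration of QCP for quantum data classification) Fix integers C ≥ 1, d ≥ 1, M ≥ 1, N ≥ 1. For each label y ∈ {1, …, C}, let ρ(y) be a d × d complex density matrix (positive semidefinite with trace 1), and let P_1, …, P_C be d × d positive semidefinite complex matrices with P_1 + ⋯ + P_C equal to the identity (a POVM). Let p be a probability distribution on {1, …, C}. Let the test label y and the calibration labels y_1, …, y_N be i.i.d. with distribution p; conditionally independently given the labels, for the test point draw M i.i.d. outcomes ŷ^1, …, ŷ^M ∈ {1, …, C} with Pr(ŷ^m = j) = Tr(P_j ρ(y)), and for each calibration point i draw M i.i.d. outcomes ŷ_i^1, …, ŷ_i^M with Pr(ŷ_i^m = j) = Tr(P_j ρ(y_i)). Define the score of a label c given outcomes (ŷ^1, …, ŷ^M) as M divided by #{ m : ŷ^m = c }, taken to be +∞ when the count is zero. For α ∈ (0,1) with α ≥ 1/(N+1), let Q_{1−α} be the ⌈(1−α)(N+1)⌉-th smallest value among the N calibration scores (scores of y_i given (ŷ_i^1, …, ŷ_i^M)), computed in the extended reals. Define Γ_M = { c ∈ {1, …, C} : score of c given (ŷ^1, …, ŷ^M)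 ≤ Q_{1−α} }. Then Pr( y ∈ Γ_M ) ≥ 1 − α, where the probability is over the test label, the calibration labels, and all measurement outcomes. -/
open MeasureTheory
open scoped ENNReal Classical ComplexOrder

/-- The `k`-th smallest value (counting multiplicities) of a list of extended
nonnegative reals: the `k`-th entry of the list sorted in nondecreasing order. -/
noncomputable def kthSmallestE (l : List ℝ≥0∞) (k : ℕ) : ℝ≥0∞ :=
  (l.mergeSort (fun a b => @decide (a ≤ b) (Classical.propDecidable _))).getD (k - 1) 0

/-- The QCP histogram score of label `c` given `M` measurement outcomes: `M` divided
by the number of shots equal to `c` (equal to `+∞` when the count is zero, by the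
`ℝ≥0∞` convention `a / 0 = ∞` for `a ≠ 0`). -/
noncomputable def histScore {C M : ℕ} (c : Fin C) (out : Fin M → Fin C) : ℝ≥0∞ :=
  (M : ℝ≥0∞) / ((Finset.univ.filter fun m : Fin M => out m = c).card : ℝ≥0∞)

theorem countP_ofFn_card {n : ℕ} (f : Fin n → ℝ≥0∞) (x : ℝ≥0∞) :
    (List.ofFn f).countP (fun a => decide (a < x)) =
      (Finset.univ.filter fun j : Fin n => f j < x).card := by
  induction n with
  | zero => simp
  | succ n ih =>
    rw [List.ofFn_succ, List.countP_cons, ih, Fin.card_filter_univ_succ]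
    by_cases h : f 0 < x
    · simp [h]
    · simp [h]

theorem le_kth (l : List ℝ≥0∞) (k : ℕ) (hk1 : 1 ≤ k) (hk : k ≤ l.length) (x : ℝ≥0∞)
    (h : l.countP (fun a => decide (a < x)) < k) : x ≤ kthSmallestE l k := by
  by_contra hx
  push Not at hx
  unfold kthSmallestE at hx
  set le : ℝ≥0∞ → ℝ≥0∞ → Bool :=
    fun a b => @decide (a ≤ b) (Classical.propDecidable _) with hle
  have hp : (l.mergeSort le).Perm l := List.mergeSort_perm l le
  have hs : (l.mergeSort le).Pairwise (fun a b => le a b = true) := by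
    apply List.pairwise_mergeSort
    · intro a b c hab hbc
      simp only [hle, decide_eq_true_eq] at *
      exact hab.trans hbc
    · intro a b
      simp only [hle, Bool.or_eq_true, decide_eq_true_eq]
      exact le_total a b
  set t := l.mergeSort le with ht
  have hlen : t.length = l.length := hp.length_eq
  have hkt : k - 1 < t.length := by omega
  rw [List.getD_eq_getElem _ _ hkt] at hx
  rw [← hp.countP_eq] at h
  have h1 : (t.take k).countP (fun a => decide (a < x)) = (t.take k).length := by
    rw [List.countP_eq_length]
    intro a ha
    rw [List.mem_iff_getElem] at ha
    obtain ⟨i, hi, rfl⟩ := ha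
    simp only [List.length_take] at hi
    rw [List.getElem_take]
    simp only [decide_eq_true_eq]
    refine lt_of_le_of_lt ?_ hx
    rcases Nat.lt_or_ge i (k-1) with hlt | hge
    · have := List.pairwise_iff_getElem.mp hs i (k-1) (by omega) hkt hlt
      simpa [hle] using this
    · have : i = k - 1 := by omega
      subst this
      exact le_rfl
  have h2 := (List.take_sublist k t).countP_le (p := fun a => decide (a < x))
  rw [h1, List.length_take] at h2
  omega

theorem card_good {n : ℕ} (s : Fin n → ℝ≥0∞) (k : ℕ) (hk : k ≤ n) :
    k ≤ (Finset.univ.filter fun i : Fin n =>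
      (Finset.univ.filter fun j : Fin n => s j < s i).card < k).card := by
  set σ := Tuple.sort s with hσ
  have hm : Monotone (s ∘ σ) := Tuple.monotone_sort s
  have hinj : Function.Injective (fun a : Fin k => σ (Fin.castLE hk a)) := by
    intro a b h
    have := σ.injective h
    exact Fin.castLE_injective hk this
  calc k = (Finset.univ.image (fun a : Fin k => σ (Fin.castLE hk a))).card := by
        rw [Finset.card_image_of_injective _ hinj]; simp
    _ ≤ _ := by
        apply Finset.card_le_card
        intro i hi
        simp only [Finset.mem_image, Finset.mem_univ, true_and] at hi
        obtain ⟨a, rfl⟩ := hi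
        simp only [Finset.mem_filter, Finset.mem_univ, true_and]
        refine lt_of_le_of_lt ?_ a.2
        calc _ ≤ ((Finset.Iio (Fin.castLE hk a)).image σ).card := by
              apply Finset.card_le_card
              intro j hj
              simp only [Finset.mem_filter, Finset.mem_univ, true_and] at hj
              simp only [Finset.mem_image, Finset.mem_Iio]
              refine ⟨σ.symm j, ?_, by simp⟩
              by_contra hc
              push Not at hc
              have := hm hc
              simp only [Function.comp_apply, Equiv.apply_symm_apply] at this
              exact absurd hj (not_lt.mpr this)
          _ ≤ (Finset.Iio (Fin.castLE hk a)).card := Finset.card_image_le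
          _ = a := by simp

/-- membership criterion -/
theorem good_of_card {N : ℕ} (s : Fin (N+1) → ℝ≥0∞) (k : ℕ) (hk1 : 1 ≤ k) (hk : k ≤ N)
    (i : Fin (N+1))
    (h : (Finset.univ.filter fun j : Fin (N+1) => s j < s i).card < k) :
    s (Equiv.swap i (Fin.last N) (Fin.last N)) ≤ kthSmallestE
      (List.ofFn fun j : Fin N => s (Equiv.swap i (Fin.last N) j.castSucc)) k := by
  apply le_kth _ _ hk1 (by simpa using hk)
  rw [countP_ofFn_card]
  refine lt_of_le_of_lt ?_ h
  rw [Equiv.swap_apply_right]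
  refine Finset.card_le_card_of_injOn
    (fun j : Fin N => Equiv.swap i (Fin.last N) j.castSucc) ?_ ?_
  · intro j hj
    simpa using hj
  · intro a _ b _ hab
    exact Fin.castSucc_injective _ ((Equiv.swap i (Fin.last N)).injective hab)

theorem exch_bound {Ω : Type*} [Fintype Ω] [MeasurableSpace Ω] [MeasurableSingletonClass Ω]
    {N : ℕ} (μ : Measure (Fin (N+1) → Ω)) (hμ : μ Set.univ = 1)
    (hex : ∀ (σ : Equiv.Perm (Fin (N+1))) w, μ {w ∘ σ} = μ {w})
    (sc : Ω → ℝ≥0∞) (k : ℕ) (hk1 : 1 ≤ k) (hk : k ≤ N) :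
    (k : ℝ≥0∞) ≤ (N + 1 : ℕ) * μ {w | sc (w (Fin.last N)) ≤
      kthSmallestE (List.ofFn fun i : Fin N => sc (w i.castSucc)) k} := by
  set S := {w : Fin (N+1) → Ω | sc (w (Fin.last N)) ≤
      kthSmallestE (List.ofFn fun i : Fin N => sc (w i.castSucc)) k} with hS
  have hsum : ∀ A : Set (Fin (N+1) → Ω), μ A = ∑ w, if w ∈ A then μ {w} else 0 := by
    intro A
    rw [← Finset.sum_filter, sum_measure_singleton]
    congr 1
    ext; simp
  have hi : ∀ i : Fin (N+1), μ S =
      ∑ w : Fin (N+1) → Ω, if w ∘ Equiv.swap i (Fin.last N) ∈ S then μ {w} else 0 := by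
    intro i
    rw [hsum]
    symm
    apply Fintype.sum_equiv (Equiv.arrowCongr (Equiv.swap i (Fin.last N)) (Equiv.refl Ω))
    intro w
    have : (Equiv.arrowCongr (Equiv.swap i (Fin.last N)) (Equiv.refl Ω)) w
      = w ∘ Equiv.swap i (Fin.last N) := by
      ext j; simp [Equiv.arrowCongr]
    rw [this, hex]
    congr
  calc (k : ℝ≥0∞) = ∑ w : Fin (N+1) → Ω, k * μ {w} := by
        have := hsum Set.univ
        simp only [Set.mem_univ, if_true] at this
        rw [← Finset.mul_sum, ← this, hμ, mul_one]
    _ ≤ ∑ w : Fin (N+1) → Ω, ∑ i : Fin (N+1),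
          if w ∘ Equiv.swap i (Fin.last N) ∈ S then μ {w} else 0 := by
        apply Finset.sum_le_sum
        intro w _
        rw [← Finset.sum_filter, Finset.sum_const, nsmul_eq_mul]
        gcongr
        refine (card_good (fun i => sc (w i)) k (by omega)).trans ?_
        apply Finset.card_le_card
        intro i h
        simp only [Finset.mem_filter, Finset.mem_univ, true_and] at h ⊢
        exact good_of_card (fun i => sc (w i)) k hk1 hk i h
    _ = ∑ i : Fin (N+1), μ S := by
        rw [Finset.sum_comm]
        exact Finset.sum_congr rfl fun i _ => (hi i).symm
    _ = _ := by simp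

theorem mix_singleton {C M n : ℕ} (p : Measure (Fin C)) [IsProbabilityMeasure p]
    (q : Fin C → Measure (Fin C)) (hq : ∀ y, IsProbabilityMeasure (q y))
    (w : Fin n → Fin C × (Fin M → Fin C)) :
    ((Measure.pi fun _ : Fin n => p).bind fun ys =>
        Measure.map
          (fun (out : Fin n → Fin M → Fin C) (i : Fin n) => (ys i, out i))
          (Measure.pi fun i => Measure.pi fun _ : Fin M => q (ys i))) {w} =
    ∏ i, ((∏ m, q (w i).1 {(w i).2 m}) * p {(w i).1}) := by
  rw [Measure.bind_apply (measurableSet_singleton _) (measurable_of_countable _).aemeasurable,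
    lintegral_fintype, Finset.sum_eq_single (fun i => (w i).1)]
  · rw [Measure.map_apply (measurable_of_countable _) (measurableSet_singleton _)]
    have : (fun (out : Fin n → Fin M → Fin C) (i : Fin n) => ((w i).1, out i)) ⁻¹' {w}
        = {fun i => (w i).2} := by
      ext out
      simp only [Set.mem_preimage, Set.mem_singleton_iff, funext_iff, Prod.ext_iff]
      simp
    rw [this, Measure.pi_singleton, Measure.pi_singleton, ← Finset.prod_mul_distrib]
    simp only [Measure.pi_singleton]
  · intro ys _ hys
    rw [Measure.map_apply (measurable_of_countable _) (measurableSet_singleton _)]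
    have : (fun (out : Fin n → Fin M → Fin C) (i : Fin n) => (ys i, out i)) ⁻¹' {w} = ∅ := by
      ext out
      simp only [Set.mem_preimage, Set.mem_singleton_iff, Set.mem_empty_iff_false, iff_false]
      rintro rfl
      exact hys rfl
    rw [this]; simp
  · simp

theorem mix_univ {C M n : ℕ} (p : Measure (Fin C)) [IsProbabilityMeasure p]
    (q : Fin C → Measure (Fin C)) (hq : ∀ y, IsProbabilityMeasure (q y)) :
    ((Measure.pi fun _ : Fin n => p).bind fun ys =>
        Measure.map
          (fun (out : Fin n → Fin M → Fin C) (i : Fin n) => (ys i, out i))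
          (Measure.pi fun i => Measure.pi fun _ : Fin M => q (ys i))) Set.univ = 1 := by
  rw [Measure.bind_apply MeasurableSet.univ (measurable_of_countable _).aemeasurable]
  have : ∀ ys : Fin n → Fin C, Measure.map
          (fun (out : Fin n → Fin M → Fin C) (i : Fin n) => (ys i, out i))
          (Measure.pi fun i => Measure.pi fun _ : Fin M => q (ys i)) Set.univ = 1 := by
    intro ys
    rw [Measure.map_apply (measurable_of_countable _) MeasurableSet.univ, Set.preimage_univ]
    exact measure_univ
  simp only [this]
  simp

/-- Calibration of QCP for quantum data classification: states `ρ y` are density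
matrices, `P_1, …, P_C` a POVM, labels i.i.d. with law `p`, and, conditionally
independently given the labels, each point receives `M` i.i.d. measurement outcomes
with the Born-rule distribution `q y {j} = Tr(P_j ρ(y))`. With the histogram score
and `Q` the `⌈(1-α)(N+1)⌉`-th smallest calibration score (in the extended reals),
the QCP set `Γ_M = {c | score of c ≤ Q}` contains the test label with probability
at least `1 - α`. -/
theorem qcp_quantum_classification_calibration
    (C d M N : ℕ) (hC : 1 ≤ C) (hd : 1 ≤ d) (hM : 1 ≤ M) (hN : 1 ≤ N)
    (ρ : Fin C → Matrix (Fin d) (Fin d) ℂ)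
    (hρpsd : ∀ y, (ρ y).PosSemidef) (hρtr : ∀ y, (ρ y).trace = 1)
    (Pm : Fin C → Matrix (Fin d) (Fin d) ℂ)
    (hPmpsd : ∀ j, (Pm j).PosSemidef) (hPsum : ∑ j, Pm j = 1)
    (p : Measure (Fin C)) [IsProbabilityMeasure p]
    (q : Fin C → Measure (Fin C)) (hq : ∀ y, IsProbabilityMeasure (q y))
    (hBorn : ∀ y j, q y {j} = ENNReal.ofReal ((Pm j * ρ y).trace.re))
    (α : ℝ) (hα0 : 0 < α) (hα1 : α < 1) (hαN : 1 / ((N : ℝ) + 1) ≤ α) :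
    ENNReal.ofReal (1 - α) ≤
      ((Measure.pi fun _ : Fin (N + 1) => p).bind fun ys =>
        Measure.map
          (fun (out : Fin (N + 1) → Fin M → Fin C) (i : Fin (N + 1)) => (ys i, out i))
          (Measure.pi fun i => Measure.pi fun _ : Fin M => q (ys i)))
      {w : Fin (N + 1) → Fin C × (Fin M → Fin C) |
        histScore (w (Fin.last N)).1 (w (Fin.last N)).2 ≤
          kthSmallestE
            (List.ofFn fun i : Fin N => histScore (w i.castSucc).1 (w i.castSucc).2)
            ⌈(1 - α) * ((N : ℝ) + 1)⌉₊} := by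
  set k := ⌈(1 - α) * ((N : ℝ) + 1)⌉₊ with hkdef
  have hN0 : (0 : ℝ) < (N : ℝ) + 1 := by positivity
  have hk1 : 1 ≤ k := Nat.one_le_iff_ne_zero.mpr
    (Nat.ceil_pos.mpr (mul_pos (by linarith) hN0)).ne'
  have hk : k ≤ N := by
    apply Nat.ceil_le.mpr
    rw [div_le_iff₀ hN0] at hαN
    linarith
  have key := exch_bound _ (mix_univ (M := M) (n := N + 1) p q hq) (fun σ w => by
    rw [mix_singleton p q hq, mix_singleton p q hq]
    exact Equiv.prod_comp σ
      (fun i => ((∏ m, q (w i).1 {(w i).2 m}) * p {(w i).1}))) 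
    (fun z : Fin C × (Fin M → Fin C) => histScore z.1 z.2) k hk1 hk
  have h1 : ENNReal.ofReal (1 - α) * ((N + 1 : ℕ) : ℝ≥0∞) ≤ (k : ℝ≥0∞) := by
    rw [← ENNReal.ofReal_natCast (N + 1), ← ENNReal.ofReal_natCast k,
      ← ENNReal.ofReal_mul (by linarith)]
    apply ENNReal.ofReal_le_ofReal
    push_cast
    exact Nat.le_ceil _
  have h2 := h1.trans key
  rw [mul_comm] at h2
  exact (ENNReal.mul_le_mul_iff_right (by simp) (ENNReal.natCast_ne_top _)).mp h2
end
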